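/- arXiv:2503.10402 — 6 statements merged into one kernel-verified Lean document; each statement's English description precedes it below -/
import Mathlib

section
/- Let f : ℝ → ℝ be twice continuously differentiable, let x* be a simple root of f (i.e. f(x*) = 0 and f'(x*) ≠ 0), and let g : ℝ → ℝ be continuously differentiable with g(0) = 0 and g'(0) ≠ 0. Then there exists δ > 0 such that for every x with 0 < |x − x*| < δ one has f(x) ≠ 0, g(f(x)) ≠ 0, and the divided-difference derivative estimate h(x) = (f(x + g(f(x))) − f(x)) / g(f(x)) is nonzero; in particular the modified Steffensen iteration map v(x) = x − f(x)/h(x) is well defined on the punctured ball 0 < |x − x*| < δ. -/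
open Filter Topology

/-! The functions `f`, `g ∘ f` and `x ↦ f (x + g (f x)) - f x` all vanish at the root, where their
derivatives `f'`, `g' * f'` and `g' * f' * f'` are nonzero. A function with nonzero derivative at a
point differs from its value there on a punctured neighbourhood. -/

theorem eventually_nhdsNE_iff_exists_norm_sub {E : Type*} [NormedAddCommGroup E] {a : E}
    {p : E → Prop} :
    (∀ᶠ x in 𝓝[≠] a, p x) ↔ ∃ δ > 0, ∀ x, 0 < ‖x - a‖ → ‖x - a‖ < δ → p x := by
  simp only [eventually_nhdsWithin_iff, Metric.eventually_nhds_iff, Set.mem_compl_singleton_iff,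
    dist_eq_norm, norm_sub_pos_iff]
  grind

section

variable {𝕜 : Type*} [NontriviallyNormedField 𝕜]

theorem hasDerivAt_comp_id_add_sub_self {F : Type*} [NormedAddCommGroup F] [NormedSpace 𝕜 F]
    {f : 𝕜 → F} {f' : F} {φ : 𝕜 → 𝕜} {φ' a : 𝕜} (hf : HasDerivAt f f' a)
    (hφ : HasDerivAt φ φ' a) (hφa : φ a = 0) :
    HasDerivAt (fun x ↦ f (x + φ x) - f x) (φ' • f') a := by
  have hshift : HasDerivAt (fun x ↦ f (x + φ x)) ((1 + φ') • f') a :=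
    hf.scomp_of_eq a ((hasDerivAt_id' a).add hφ) (by simp [hφa])
  simpa [add_smul] using hshift.fun_sub hf

theorem modified_steffensen_well_defined_general {f g : 𝕜 → 𝕜} {f' g' xs : 𝕜}
    (hf : HasDerivAt f f' xs) (hroot : f xs = 0) (hf' : f' ≠ 0)
    (hg : HasDerivAt g g' 0) (hg0 : g 0 = 0) (hg' : g' ≠ 0) :
    ∀ᶠ x in 𝓝[≠] xs, f x ≠ 0 ∧ g (f x) ≠ 0 ∧ (f (x + g (f x)) - f x) / g (f x) ≠ 0 := by
  have hgf : HasDerivAt (fun x ↦ g (f x)) (g' * f') xs := hg.comp_of_eq xs hf hroot.symm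
  have hgf' : g' * f' ≠ 0 := mul_ne_zero hg' hf'
  have hnum : HasDerivAt (fun x ↦ f (x + g (f x)) - f x) ((g' * f') • f') xs :=
    hasDerivAt_comp_id_add_sub_self hf hgf (by rw [hroot, hg0])
  filter_upwards [hf.eventually_ne hf', hgf.eventually_ne hgf',
    hnum.eventually_ne (smul_ne_zero hgf' hf')] with x hfx hgfx hnumx
  exact ⟨hfx, hgfx, div_ne_zero hnumx hgfx⟩

end

/-- Near a simple root, the modified Steffensen divided-difference estimate
`h(x) = (f (x + g (f x)) - f x) / g (f x)` is well defined: on a punctured ball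
around the root, `f x ≠ 0`, `g (f x) ≠ 0` and `h x ≠ 0`, so the iteration map
`v(x) = x - f x / h x` is well defined. -/
theorem modified_steffensen_well_defined
    (f : ℝ → ℝ) (hf : ContDiff ℝ 2 f) (xs : ℝ)
    (hroot : f xs = 0) (hf' : deriv f xs ≠ 0)
    (g : ℝ → ℝ) (hg : ContDiff ℝ 1 g) (hg0 : g 0 = 0) (hg' : deriv g 0 ≠ 0) :
    ∃ δ > 0, ∀ x : ℝ, 0 < |x - xs| → |x - xs| < δ →
      f x ≠ 0 ∧ g (f x) ≠ 0 ∧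
        (f (x + g (f x)) - f x) / g (f x) ≠ 0 :=
  eventually_nhdsNE_iff_exists_norm_sub.1 <| modified_steffensen_well_defined_general
    (hf.differentiable two_ne_zero xs).hasDerivAt hroot hf'
    (hg.differentiable one_ne_zero 0).hasDerivAt hg0 hg'
end

section
/- Let f : ℝ → ℝ be twice continuously differentiable, let x* be a simple root of f (i.e. f(x*) = 0 and f'(x*) ≠ 0), and let g : ℝ → ℝ be continuously differentiable with g(0) = 0 and g'(0) ≠ 0. Then the divided-difference derivative estimate h(x) = (f(x + g(f(x))) − f(x)) / g(f(x)) converges to the true derivative at the root: the limit of h(x) as x → x* through points x ≠ x* (where h is well defined) equals f'(x*). -/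
open Filter Topology

/-!
Write `s = g ∘ f` for the step. Its derivative `s' = g'(0) f'(x*)` at the root is nonzero, while the
numerator `f (x + s x) - f x` vanishes at the root and has derivative
`f'(x*) (1 + s') - f'(x*) = s' f'(x*)` there. The ratio of two functions vanishing at the root tends
to the ratio of their derivatives, and `s'` cancels.
-/

section NontriviallyNormedField

variable {𝕜 : Type*} [NontriviallyNormedField 𝕜]

section VectorValued

variable {E : Type*} [NormedAddCommGroup E] [NormedSpace 𝕜 E] {a : 𝕜}

theorem tendsto_inv_smul_of_hasDerivAt_of_eq_zero {u : 𝕜 → E} {u' : E} {s : 𝕜 → 𝕜} {s' : 𝕜}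
    (hu : HasDerivAt u u' a) (hs : HasDerivAt s s' a) (hua : u a = 0) (hsa : s a = 0)
    (hs' : s' ≠ 0) :
    Tendsto (fun x => (s x)⁻¹ • u x) (𝓝[≠] a) (𝓝 (s'⁻¹ • u')) := by
  have slopes_tendsto :
      Tendsto (fun x => (slope s a x)⁻¹ • slope u a x) (𝓝[≠] a) (𝓝 (s'⁻¹ • u')) :=
    (hs.tendsto_slope.inv₀ hs').smul hu.tendsto_slope
  refine slopes_tendsto.congr' ?_
  filter_upwards [self_mem_nhdsWithin] with x hx
  have hxa : x - a ≠ 0 := sub_ne_zero.mpr hx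
  rw [slope_def_field, slope_def_module, hua, hsa, sub_zero, sub_zero, inv_div, smul_smul,
    div_mul_eq_mul_div, mul_inv_cancel₀ hxa, one_div]

theorem hasDerivAt_comp_add_sub {f : 𝕜 → E} {f' : E} {s : 𝕜 → 𝕜} {s' : 𝕜}
    (hf : HasDerivAt f f' a) (hs : HasDerivAt s s' a) (hsa : s a = 0) :
    HasDerivAt (fun x => f (x + s x) - f x) (s' • f') a := by
  have shifted_hasDerivAt : HasDerivAt (fun x => f (x + s x)) ((1 + s') • f') a := by
    refine HasDerivAt.scomp a ?_ ((hasDerivAt_id a).add hs)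
    simpa only [Pi.add_apply, id_eq, hsa, add_zero] using hf
  refine (shifted_hasDerivAt.sub hf).congr_deriv ?_
  rw [add_smul, one_smul, add_sub_cancel_left]

theorem tendsto_inv_smul_comp_add_sub {f : 𝕜 → E} {f' : E} {s : 𝕜 → 𝕜} {s' : 𝕜}
    (hf : HasDerivAt f f' a) (hs : HasDerivAt s s' a) (hsa : s a = 0) (hs' : s' ≠ 0) :
    Tendsto (fun x => (s x)⁻¹ • (f (x + s x) - f x)) (𝓝[≠] a) (𝓝 f') := by
  have numerator_eq_zero : f (a + s a) - f a = 0 := by rw [hsa, add_zero, sub_self]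
  simpa only [inv_smul_smul₀ hs'] using
    tendsto_inv_smul_of_hasDerivAt_of_eq_zero (hasDerivAt_comp_add_sub hf hs hsa) hs
      numerator_eq_zero hsa hs'

end VectorValued

theorem modified_steffensen_derivative_estimate_tendsto_general {f g : 𝕜 → 𝕜} {f' g' a : 𝕜}
    (hf : HasDerivAt f f' a) (hroot : f a = 0) (hf' : f' ≠ 0)
    (hg : HasDerivAt g g' 0) (hg0 : g 0 = 0) (hg' : g' ≠ 0) :
    Tendsto (fun x => (f (x + g (f x)) - f x) / g (f x)) (𝓝[≠] a) (𝓝 f') := by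
  have step_hasDerivAt : HasDerivAt (fun x => g (f x)) (g' * f') a :=
    HasDerivAt.comp a (hroot.symm ▸ hg) hf
  have step_eq_zero : g (f a) = 0 := by rw [hroot, hg0]
  simpa only [smul_eq_mul, ← div_eq_inv_mul] using
    tendsto_inv_smul_comp_add_sub hf step_hasDerivAt step_eq_zero (mul_ne_zero hg' hf')

end NontriviallyNormedField

/-- Near a simple root, the divided-difference derivative estimate
`h(x) = (f (x + g (f x)) - f x) / g (f x)` converges to the true derivative
`f'(x*)` as `x → x*` through points `x ≠ x*`. -/
theorem modified_steffensen_derivative_estimate_tendsto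
    (f : ℝ → ℝ) (hf : ContDiff ℝ 2 f) (xs : ℝ)
    (hroot : f xs = 0) (hf' : deriv f xs ≠ 0)
    (g : ℝ → ℝ) (hg : ContDiff ℝ 1 g) (hg0 : g 0 = 0) (hg' : deriv g 0 ≠ 0) :
    Tendsto (fun x : ℝ => (f (x + g (f x)) - f x) / g (f x))
      (𝓝[≠] xs) (𝓝 (deriv f xs)) := by
  exact modified_steffensen_derivative_estimate_tendsto_general
    (hf.differentiable two_ne_zero xs).hasDerivAt hroot hf'
    (hg.differentiable_one 0).hasDerivAt hg0 hg'
end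

section
/- Let f : ℝ → ℝ be twice continuously differentiable, let x* be a simple root of f (i.e. f(x*) = 0 and f'(x*) ≠ 0), and let g : ℝ → ℝ be continuously differentiable with g(0) = 0 and g'(0) ≠ 0. Then the modified Steffensen iteration map v(x) = x − f(x)/h(x), with h(x) = (f(x + g(f(x))) − f(x)) / g(f(x)), satisfies v(x) → x* as x → x* through points x ≠ x*; that is, x* is a fixed point of the continuous extension of v. -/
open Filter Topology

section DividedDifference

variable {α 𝕜 E : Type*} [NontriviallyNormedField 𝕜] [NormedAddCommGroup E] [NormedSpace 𝕜 E]

-- Strict differentiability controls the secant slope while both of its endpoints move.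
theorem tendsto_inv_smul_sub_of_hasStrictDerivAt {f : 𝕜 → E} {f' : E} {a : 𝕜} {l : Filter α}
    {x k : α → 𝕜} (hf : HasStrictDerivAt f f' a) (hx : Tendsto x l (𝓝 a))
    (hk : Tendsto k l (𝓝[≠] 0)) :
    Tendsto (fun t => (k t)⁻¹ • (f (x t + k t) - f (x t))) l (𝓝 f') := by
  obtain ⟨hk_zero, hk_ne⟩ := tendsto_nhdsWithin_iff.mp hk
  have hxk : Tendsto (fun t => x t + k t) l (𝓝 a) := by simpa using hx.add hk_zero
  have hremainder : (fun t => f (x t + k t) - f (x t) - k t • f') =o[l] k := by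
    simpa [Function.comp_def] using hf.isLittleO.comp_tendsto (hxk.prodMk_nhds hx)
  have hquotient :
      Tendsto (fun t => (k t)⁻¹ • (f (x t + k t) - f (x t) - k t • f')) l (𝓝 0) :=
    hremainder.tendsto_inv_smul_nhds_zero
  rw [← tendsto_sub_nhds_zero_iff]
  refine hquotient.congr' ?_
  filter_upwards [hk_ne] with t ht
  rw [smul_sub, inv_smul_smul₀ ht]

end DividedDifference

section Steffensen

variable {𝕜 : Type*} [NontriviallyNormedField 𝕜] {f g : 𝕜 → 𝕜} {f' a : 𝕜}

/-- The divided difference `h` that replaces the derivative of `f` in the modified Steffensen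
method; its step at `x` is `g (f x)`, and its value is the junk value `0` where that step
vanishes. -/
def steffensenSlope (f g : 𝕜 → 𝕜) (x : 𝕜) : 𝕜 :=
  (f (x + g (f x)) - f x) / g (f x)

/-- The iteration map `v` of the modified Steffensen method: a Newton step with
`steffensenSlope f g` in place of the derivative of `f`. -/
def steffensenMap (f g : 𝕜 → 𝕜) (x : 𝕜) : 𝕜 :=
  x - f x / steffensenSlope f g x

theorem tendsto_steffensenSlope (hf : HasStrictDerivAt f f' a) (hroot : f a = 0) (hf' : f' ≠ 0)
    (hg : Tendsto g (𝓝[≠] 0) (𝓝[≠] 0)) :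
    Tendsto (steffensenSlope f g) (𝓝[≠] a) (𝓝 f') := by
  have hf_punctured : Tendsto f (𝓝[≠] a) (𝓝[≠] 0) :=
    hroot ▸ hf.hasDerivAt.tendsto_nhdsNE hf'
  have hslope := tendsto_inv_smul_sub_of_hasStrictDerivAt hf
    (tendsto_id.mono_left nhdsWithin_le_nhds) (hg.comp hf_punctured)
  exact hslope.congr fun x => inv_mul_eq_div _ _

theorem modified_steffensen_map_tendsto_root_general (hf : HasStrictDerivAt f f' a)
    (hroot : f a = 0) (hf' : f' ≠ 0) (hg : Tendsto g (𝓝[≠] 0) (𝓝[≠] 0)) :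
    Tendsto (steffensenMap f g) (𝓝[≠] a) (𝓝 a) := by
  have hid : Tendsto (fun x : 𝕜 => x) (𝓝[≠] a) (𝓝 a) := nhdsWithin_le_nhds
  have hf_zero : Tendsto f (𝓝[≠] a) (𝓝 0) :=
    hroot ▸ hf.hasDerivAt.continuousAt.tendsto.comp hid
  have hcorrection : Tendsto (fun x => f x / steffensenSlope f g x) (𝓝[≠] a) (𝓝 0) := by
    simpa only [zero_div, Pi.div_def] using
      hf_zero.div (tendsto_steffensenSlope hf hroot hf' hg) hf'
  unfold steffensenMap
  simpa only [sub_zero] using hid.sub hcorrection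

end Steffensen

/-- Near a simple root `x*`, the modified Steffensen iteration map
`v(x) = x - f x / h x` with `h(x) = (f (x + g (f x)) - f x) / g (f x)`
satisfies `v x → x*` as `x → x*` through points `x ≠ x*`. -/
theorem modified_steffensen_map_tendsto_root
    (f : ℝ → ℝ) (hf : ContDiff ℝ 2 f) (xs : ℝ)
    (hroot : f xs = 0) (hf' : deriv f xs ≠ 0)
    (g : ℝ → ℝ) (hg : ContDiff ℝ 1 g) (hg0 : g 0 = 0) (hg' : deriv g 0 ≠ 0) :
    Tendsto (fun x : ℝ =>
        x - f x / ((f (x + g (f x)) - f x) / g (f x)))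
      (𝓝[≠] xs) (𝓝 xs) := by
  have hg_punctured : Tendsto g (𝓝[≠] 0) (𝓝[≠] 0) := by
    simpa only [hg0] using (hg.differentiable one_ne_zero 0).hasDerivAt.tendsto_nhdsNE hg'
  exact modified_steffensen_map_tendsto_root_general
    (hf.contDiffAt.hasStrictDerivAt two_ne_zero) hroot hf' hg_punctured
end

section
/- Let f : ℝ → ℝ be twice continuously differentiable, let x* be a simple root of f (i.e. f(x*) = 0 and f'(x*) ≠ 0), and let g : ℝ → ℝ be continuously differentiable with g(0) = 0 and g'(0) ≠ 0. Then the modified Steffensen iteration map v(x) = x − f(x)/h(x), with h(x) = (f(x + g(f(x))) − f(x)) / g(f(x)), is locally quadratically accurate: there exist constants C > 0 and δ > 0 such that for all x with 0 < |x − x*| < δ, one has |v(x) − x*| ≤ C |x − x*|². -/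
open Filter Topology

/-!
Put `e = x - a`, where `a` is the root. As `f a = 0`, the divided difference `q` of `f` between `a`
and `x` satisfies `f x = q * e`, so the error of a step is `e - f x / h = e * ((h - q) / h)`. Both
`h` and `q` are divided differences of `f` between points at distance `O(e)` from `a`, hence by the
mean value inequality both are `f' a + O(e)`. Thus `h - q = O(e)`, while `h` stays away from zero.
-/

open Asymptotics

section DividedDifference

variable {𝕜 E : Type*} [RCLike 𝕜] [NormedAddCommGroup E] [NormedSpace 𝕜 E] {f f' : 𝕜 → E}

lemma norm_slope_sub_le_of_hasDerivWithinAt {s : Set 𝕜} {m : E} {C : ℝ} {x y : 𝕜}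
    (hf : ∀ z ∈ s, HasDerivWithinAt f (f' z) s z) (bound : ∀ z ∈ s, ‖f' z - m‖ ≤ C)
    (hs : Convex ℝ s) (hx : x ∈ s) (hy : y ∈ s) (hxy : x ≠ y) : ‖slope f x y - m‖ ≤ C := by
  have hsub : y - x ≠ 0 := sub_ne_zero.2 hxy.symm
  have hderiv (z : 𝕜) (hz : z ∈ s) : HasDerivWithinAt (fun z ↦ f z - z • m) (f' z - m) s z := by
    simpa only [one_smul, id] using (hf z hz).fun_sub ((hasDerivWithinAt_id z s).smul_const m)
  have hmean : ‖f y - y • m - (f x - x • m)‖ ≤ C * ‖y - x‖ :=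
    hs.norm_image_sub_le_of_norm_hasDerivWithin_le hderiv bound hx hy
  have hslope : f y - y • m - (f x - x • m) = (y - x) • (slope f x y - m) := by
    rw [smul_sub, sub_smul_slope, vsub_eq_sub, sub_smul]
    abel
  rw [hslope, norm_smul, mul_comm] at hmean
  exact le_of_mul_le_mul_right hmean (norm_pos_iff.2 hsub)

lemma isBigO_slope_sub {a : 𝕜} (hf : ∀ᶠ x in 𝓝 a, HasDerivAt f (f' x) x)
    (hf' : (fun x ↦ f' x - f' a) =O[𝓝 a] fun x ↦ x - a) :
    (fun p : 𝕜 × 𝕜 ↦ slope f p.1 p.2 - f' a) =O[𝓝[{p | p.1 ≠ p.2}] (a, a)]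
      fun p ↦ p - (a, a) := by
  obtain ⟨C, hC, hbound⟩ := hf'.exists_nonneg
  obtain ⟨r, hr, hball⟩ := Metric.eventually_nhds_iff_ball.1 (hf.and hbound.bound)
  refine .of_bound C (eventually_nhdsWithin_iff.2 ?_)
  filter_upwards [Metric.ball_mem_nhds (a, a) hr] with p hp hne
  have hsubset : Metric.closedBall a (dist p (a, a)) ⊆ Metric.ball a r :=
    Metric.closedBall_subset_ball hp
  refine norm_slope_sub_le_of_hasDerivWithinAt (s := Metric.closedBall a (dist p (a, a)))
    (fun z hz ↦ (hball z (hsubset hz)).1.hasDerivWithinAt) (fun z hz ↦ ?_)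
    (convex_closedBall a _) (le_max_left (dist p.1 a) (dist p.2 a))
    (le_max_right (dist p.1 a) (dist p.2 a)) hne
  calc ‖f' z - f' a‖ ≤ C * ‖z - a‖ := (hball z (hsubset hz)).2
    _ ≤ C * ‖p - (a, a)‖ := by
      rw [← dist_eq_norm, ← dist_eq_norm]
      exact mul_le_mul_of_nonneg_left hz hC

lemma isBigO_slope_sub_of_isBigO {α F : Type*} [NormedAddCommGroup F] {l : Filter α}
    {u v : α → 𝕜} {w : α → F} {a : 𝕜}
    (hf : ∀ᶠ x in 𝓝 a, HasDerivAt f (f' x) x)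
    (hf' : (fun x ↦ f' x - f' a) =O[𝓝 a] fun x ↦ x - a)
    (hu : (fun t ↦ u t - a) =O[l] w) (hv : (fun t ↦ v t - a) =O[l] w)
    (hw : Tendsto w l (𝓝 0)) (huv : ∀ᶠ t in l, u t ≠ v t) :
    (fun t ↦ slope f (u t) (v t) - f' a) =O[l] w := by
  have hlim : Tendsto (fun t ↦ (u t, v t)) l (𝓝 (a, a)) :=
    (tendsto_sub_nhds_zero_iff.1 (hu.trans_tendsto hw)).prodMk_nhds
      (tendsto_sub_nhds_zero_iff.1 (hv.trans_tendsto hw))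
  exact ((isBigO_slope_sub hf hf').comp_tendsto
    (tendsto_nhdsWithin_iff.2 ⟨hlim, huv⟩)).trans (hu.prod_left hv)

end DividedDifference

lemma exists_forall_norm_le_of_isBigO_nhdsNE {E F G : Type*} [SeminormedAddCommGroup E] [Norm F]
    [SeminormedAddCommGroup G] {u : E → F} {v : E → G} {a : E} (huv : u =O[𝓝[≠] a] v) :
    ∃ C > 0, ∃ δ > 0, ∀ x, 0 < ‖x - a‖ → ‖x - a‖ < δ → ‖u x‖ ≤ C * ‖v x‖ := by
  obtain ⟨C, hC, hbound⟩ := huv.exists_pos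
  obtain ⟨δ, hδ, hball⟩ := Metric.mem_nhdsWithin_iff.1 hbound.bound
  refine ⟨C, hC, δ, hδ, fun x hpos hlt ↦ hball ⟨mem_ball_iff_norm.2 hlt, ?_⟩⟩
  rintro rfl
  simp at hpos

section SteffensenStep

variable {K : Type*} [Field K]

/-- The iteration map `v` of the modified Steffensen method for `f` with auxiliary function `g`: a
Newton step in which the derivative is replaced by the divided difference `h` of `f` between `x` and
`x + g (f x)`. It has the junk value `x` when this divided difference vanishes, in particular when
`g (f x) = 0`. -/
def steffensenStep (f g : K → K) (x : K) : K :=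
  x - f x / slope f x (x + g (f x))

lemma steffensenStep_eq (f g : K → K) (x : K) :
    steffensenStep f g x = x - f x / ((f (x + g (f x)) - f x) / g (f x)) := by
  rw [steffensenStep, slope_def_field, add_sub_cancel_left]

lemma steffensenStep_sub_eq_mul {f g : K → K} {a x : K} (hroot : f a = 0)
    (hslope : slope f x (x + g (f x)) ≠ 0) :
    steffensenStep f g x - a =
      (x - a) * ((slope f x (x + g (f x)) - slope f a x) * (slope f x (x + g (f x)))⁻¹) := by
  have hfx : f x = (x - a) * slope f a x := by
    rw [← smul_eq_mul, sub_smul_slope, vsub_eq_sub, hroot, sub_zero]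
  rw [steffensenStep]
  generalize slope f x (x + g (f x)) = h at hslope ⊢
  rw [hfx]
  field_simp
  ring

end SteffensenStep

section Convergence

variable {𝕜 : Type*} [RCLike 𝕜] {f f' g : 𝕜 → 𝕜} {a : 𝕜}

lemma isBigO_slope_steffensen_sub_deriv (hf : ∀ᶠ x in 𝓝 a, HasDerivAt f (f' x) x)
    (hf' : (fun x ↦ f' x - f' a) =O[𝓝 a] fun x ↦ x - a) (hroot : f a = 0) (hsimple : f' a ≠ 0)
    (hg : g =O[𝓝[≠] 0] fun y ↦ y) (hg_ne : ∀ᶠ y in 𝓝[≠] 0, g y ≠ 0) :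
    (fun x ↦ slope f x (x + g (f x)) - f' a) =O[𝓝[≠] a] fun x ↦ x - a := by
  have hfa : HasDerivAt f (f' a) a := hf.self_of_nhds
  have hf_lim : Tendsto f (𝓝[≠] a) (𝓝[≠] 0) := hroot ▸ hfa.tendsto_nhdsNE hsimple
  have hf_bigO : f =O[𝓝[≠] a] fun x ↦ x - a := by
    simpa only [hroot, sub_zero] using hfa.isBigO_sub.mono nhdsWithin_le_nhds
  have hgf_bigO : (fun x ↦ g (f x)) =O[𝓝[≠] a] fun x ↦ x - a :=
    (hg.comp_tendsto hf_lim).trans hf_bigO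
  have hgf_ne : ∀ᶠ x in 𝓝[≠] a, x ≠ x + g (f x) :=
    (hf_lim.eventually hg_ne).mono fun x hx ↦ (add_ne_left.2 hx).symm
  exact isBigO_slope_sub_of_isBigO hf hf' (isBigO_refl _ _)
    (((isBigO_refl _ _).add hgf_bigO).congr_left fun x ↦ sub_add_eq_add_sub _ _ _)
    (tendsto_sub_nhds_zero_iff.2 nhdsWithin_le_nhds) hgf_ne

theorem modified_steffensen_locally_quadratic_general
    (hf : ∀ᶠ x in 𝓝 a, HasDerivAt f (f' x) x)
    (hf' : (fun x ↦ f' x - f' a) =O[𝓝 a] fun x ↦ x - a) (hroot : f a = 0) (hsimple : f' a ≠ 0)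
    (hg : g =O[𝓝[≠] 0] fun y ↦ y) (hg_ne : ∀ᶠ y in 𝓝[≠] 0, g y ≠ 0) :
    (fun x ↦ steffensenStep f g x - a) =O[𝓝[≠] a] fun x ↦ (x - a) ^ 2 := by
  set h : 𝕜 → 𝕜 := fun x ↦ slope f x (x + g (f x))
  have he : Tendsto (fun x ↦ x - a) (𝓝[≠] a) (𝓝 0) :=
    tendsto_sub_nhds_zero_iff.2 nhdsWithin_le_nhds
  have hh : (fun x ↦ h x - f' a) =O[𝓝[≠] a] fun x ↦ x - a :=
    isBigO_slope_steffensen_sub_deriv hf hf' hroot hsimple hg hg_ne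
  have hq : (fun x ↦ slope f a x - f' a) =O[𝓝[≠] a] fun x ↦ x - a :=
    isBigO_slope_sub_of_isBigO hf hf' (by simpa only [sub_self] using isBigO_zero _ _)
      (isBigO_refl _ _) he (eventually_mem_nhdsWithin.mono fun x hx ↦ Ne.symm hx)
  have hhq : (fun x ↦ h x - slope f a x) =O[𝓝[≠] a] fun x ↦ x - a :=
    (hh.sub hq).congr_left fun x ↦ sub_sub_sub_cancel_right _ _ _
  have hh_lim : Tendsto h (𝓝[≠] a) (𝓝 (f' a)) :=
    tendsto_sub_nhds_zero_iff.1 (hh.trans_tendsto he)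
  have herror : (fun x ↦ (x - a) * ((h x - slope f a x) * (h x)⁻¹)) =O[𝓝[≠] a]
      fun x ↦ (x - a) * ((x - a) * 1) :=
    (isBigO_refl _ _).mul (hhq.mul ((hh_lim.inv₀ hsimple).isBigO_one 𝕜))
  refine herror.congr' ?_ (.of_forall fun x ↦ by ring)
  filter_upwards [hh_lim.eventually_ne hsimple] with x hx
  exact (steffensenStep_sub_eq_mul hroot hx).symm

end Convergence

/-- Near a simple root `x*`, the modified Steffensen iteration map
`v(x) = x - f x / h x` with `h(x) = (f (x + g (f x)) - f x) / g (f x)`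
is locally quadratically accurate: `|v x - x*| ≤ C |x - x*|²` on a punctured
ball around `x*`. -/
theorem modified_steffensen_locally_quadratic
    (f : ℝ → ℝ) (hf : ContDiff ℝ 2 f) (xs : ℝ)
    (hroot : f xs = 0) (hf' : deriv f xs ≠ 0)
    (g : ℝ → ℝ) (hg : ContDiff ℝ 1 g) (hg0 : g 0 = 0) (hg' : deriv g 0 ≠ 0) :
    ∃ C > 0, ∃ δ > 0, ∀ x : ℝ, 0 < |x - xs| → |x - xs| < δ →
      |(x - f x / ((f (x + g (f x)) - f x) / g (f x))) - xs| ≤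
        C * |x - xs| ^ 2 := by
  have hg_deriv : HasDerivAt g (deriv g 0) 0 := (hg.differentiable one_ne_zero 0).hasDerivAt
  have hg_bigO : g =O[𝓝[≠] 0] fun y ↦ y := by
    simpa only [hg0, sub_zero] using hg_deriv.isBigO_sub.mono nhdsWithin_le_nhds
  have hquadratic := modified_steffensen_locally_quadratic_general
    (.of_forall fun x ↦ (hf.differentiable two_ne_zero x).hasDerivAt)
    (hf.differentiable_deriv_two xs).hasDerivAt.isBigO_sub hroot hf' hg_bigO
    (hg_deriv.eventually_ne hg')
  simpa only [steffensenStep_eq, norm_pow, Real.norm_eq_abs] using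
    exists_forall_norm_le_of_isBigO_nhdsNE hquadratic
end

section
/- Let f : ℝ → ℝ be twice continuously differentiable, let x* be a simple root of f (i.e. f(x*) = 0 and f'(x*) ≠ 0), and let g : ℝ → ℝ be continuously differentiable with g(0) = 0 and g'(0) ≠ 0. Then the second-order error coefficient of the modified Steffensen iteration map v(x) = x − f(x)/h(x), with h(x) = (f(x + g(f(x))) − f(x)) / g(f(x)), is given by: the limit of (v(x) − x*)/(x − x*)² as x → x* through points x ≠ x* equals f''(x*)·(1 + g'(0)·f'(x*)) / (2·f'(x*)); in particular the error recurrence e_{k+1} = (1/2)·v''(x*)·e_k² + O(e_k³) holds for the error e_k = x_k − x* of the iteration x_{k+1} = v(x_k). -/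
open Filter Topology

/-!
Write `e = x - x*`, `S = slope f x (q x)` for the divided difference with nodes `x` and `q x`, and
`T = slope f x* x`. Since `f x = e * T`, one step has error `x - f x / S - x* = e * (S - T) / S`.
If `f'` is differentiable at `x*`, a divided difference of `f` with nodes `y`, `z` near `x*` is
`f'(x*) + f''(x*) * ((y - x*) + (z - x*)) / 2` up to `o(|y - x*| + |z - x*|)`, so the contributions
of `x` cancel in `S - T` and leave `f''(x*) * (q x - x*) / 2 + o(e)`. The Steffensen iteration is
the case `q x = x + g (f x)`, for which `q'(x*) = 1 + g'(0) * f'(x*)`.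
-/

open Asymptotics

section DividedDifference

variable {𝕜 E : Type*} [RCLike 𝕜] [NormedAddCommGroup E] [NormedSpace 𝕜 E]
  {f f' : 𝕜 → E} {c : E} {x₀ : 𝕜}

theorem isLittleO_slope_of_deriv_isLittleO
    (hf : ∀ᶠ x in 𝓝 x₀, HasDerivAt f (f' x) x) (hf' : f' =o[𝓝 x₀] fun x ↦ x - x₀) :
    (fun p : 𝕜 × 𝕜 ↦ slope f p.1 p.2) =o[𝓝 (x₀, x₀)] fun p ↦ p - (x₀, x₀) := by
  refine isLittleO_iff.2 fun ε hε ↦ ?_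
  obtain ⟨δ, hδ, hball⟩ := Metric.eventually_nhds_iff_ball.1 (hf.and (hf'.def hε))
  filter_upwards [Metric.ball_mem_nhds (x₀, x₀) hδ] with p hp
  set ρ := ‖p - (x₀, x₀)‖
  have hsub : Metric.closedBall x₀ ρ ⊆ Metric.ball x₀ δ :=
    Metric.closedBall_subset_ball (mem_ball_iff_norm.1 hp)
  have hderiv_le : ∀ x ∈ Metric.closedBall x₀ ρ, ‖f' x‖ ≤ ε * ρ := fun x hx ↦
    (hball x (hsub hx)).2.trans
      (mul_le_mul_of_nonneg_left (mem_closedBall_iff_norm.1 hx) hε.le)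
  have himage : ‖f p.2 - f p.1‖ ≤ ε * ρ * ‖p.2 - p.1‖ :=
    (convex_closedBall x₀ ρ).norm_image_sub_le_of_norm_hasDerivWithin_le
      (fun x hx ↦ (hball x (hsub hx)).1.hasDerivWithinAt) hderiv_le
      (mem_closedBall_iff_norm.2 (norm_fst_le (p - (x₀, x₀))))
      (mem_closedBall_iff_norm.2 (norm_snd_le (p - (x₀, x₀))))
  rw [slope_def_module, norm_smul, norm_inv]
  exact inv_mul_le_of_le_mul₀ (norm_nonneg _) (by positivity) (by rwa [mul_comm])

theorem isLittleO_slope_sub_second_order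
    (hf : ∀ᶠ x in 𝓝 x₀, HasDerivAt f (f' x) x) (hf' : HasDerivAt f' c x₀) :
    (fun p : 𝕜 × 𝕜 ↦ slope f p.1 p.2 - f' x₀ - (((p.1 - x₀) + (p.2 - x₀)) / 2) • c)
      =o[𝓝[(Set.diagonal 𝕜)ᶜ] (x₀, x₀)] fun p ↦ p - (x₀, x₀) := by
  have hremainder : ∀ᶠ x in 𝓝 x₀, HasDerivAt
      (fun z ↦ f z - (z - x₀) • f' x₀ - ((z - x₀) ^ 2 / 2) • c)
      (f' x - f' x₀ - (x - x₀) • c) x := by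
    filter_upwards [hf] with x hx
    have hlin : HasDerivAt (fun z ↦ z - x₀) 1 x := (hasDerivAt_id x).sub_const x₀
    have hquad : HasDerivAt (fun z ↦ (z - x₀) ^ 2 / 2) (x - x₀) x :=
      ((hlin.fun_pow 2).div_const 2).congr_deriv (by simp)
    exact ((hx.sub (hlin.smul_const (f' x₀))).sub (hquad.smul_const c)).congr_deriv
      (by rw [one_smul])
  have hslope := isLittleO_slope_of_deriv_isLittleO hremainder (hasDerivAt_iff_isLittleO.1 hf')
  refine (hslope.mono nhdsWithin_le_nhds).congr' ?_ .rfl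
  filter_upwards [self_mem_nhdsWithin] with p hp
  have hne : p.2 - p.1 ≠ 0 := sub_ne_zero.2 (Ne.symm hp)
  simp only [slope_def_module]
  match_scalars <;> field_simp
  all_goals ring

theorem tendsto_inv_smul_slope_sub_deriv {p q : 𝕜 → 𝕜} {p' q' : 𝕜}
    (hf : ∀ᶠ x in 𝓝 x₀, HasDerivAt f (f' x) x) (hf' : HasDerivAt f' c x₀)
    (hp : HasDerivAt p p' x₀) (hp₀ : p x₀ = x₀) (hq : HasDerivAt q q' x₀) (hq₀ : q x₀ = x₀)
    (hpq : ∀ᶠ x in 𝓝[≠] x₀, p x ≠ q x) :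
    Tendsto (fun x ↦ (x - x₀)⁻¹ • (slope f (p x) (q x) - f' x₀)) (𝓝[≠] x₀)
      (𝓝 (((p' + q') / 2) • c)) := by
  have hnodes : HasDerivAt (fun x ↦ (p x, q x)) (p', q') x₀ := hp.prodMk hq
  have hnodes_tendsto :
      Tendsto (fun x ↦ (p x, q x)) (𝓝[≠] x₀) (𝓝[(Set.diagonal 𝕜)ᶜ] (x₀, x₀)) := by
    refine tendsto_nhdsWithin_iff.2 ⟨?_, hpq⟩
    simpa only [hp₀, hq₀] using hnodes.continuousAt.tendsto.mono_left nhdsWithin_le_nhds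
  have hnodes_isBigO : (fun x ↦ (p x, q x) - (x₀, x₀)) =O[𝓝[≠] x₀] fun x ↦ x - x₀ := by
    simpa only [hp₀, hq₀] using hnodes.isBigO_sub.mono nhdsWithin_le_nhds
  have herror := (((isLittleO_slope_sub_second_order hf hf').comp_tendsto
    hnodes_tendsto).trans_isBigO hnodes_isBigO).tendsto_inv_smul_nhds_zero
  have hmidpoint : Tendsto (fun x ↦ ((slope p x₀ x + slope q x₀ x) / 2) • c) (𝓝[≠] x₀)
      (𝓝 (((p' + q') / 2) • c)) :=
    ((hp.tendsto_slope.add hq.tendsto_slope).div_const 2).smul_const c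
  refine (zero_add (((p' + q') / 2) • c) ▸ herror.add hmidpoint).congr fun x ↦ ?_
  simp only [Function.comp_apply, slope_def_field, hp₀, hq₀]
  module

theorem tendsto_inv_smul_slope_sub_slope {q : 𝕜 → 𝕜} {q' : 𝕜}
    (hf : ∀ᶠ x in 𝓝 x₀, HasDerivAt f (f' x) x) (hf' : HasDerivAt f' c x₀)
    (hq : HasDerivAt q q' x₀) (hq₀ : q x₀ = x₀) (hqne : ∀ᶠ x in 𝓝[≠] x₀, q x ≠ x) :
    Tendsto (fun x ↦ (x - x₀)⁻¹ • (slope f x (q x) - slope f x₀ x)) (𝓝[≠] x₀)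
      (𝓝 ((q' / 2) • c)) := by
  have hmoving := tendsto_inv_smul_slope_sub_deriv hf hf' (hasDerivAt_id x₀) rfl hq hq₀
    (hqne.mono fun _ h ↦ h.symm)
  have hfixed := tendsto_inv_smul_slope_sub_deriv hf hf' (hasDerivAt_const x₀ x₀) rfl
    (hasDerivAt_id x₀) rfl (eventually_mem_nhdsWithin.mono fun _ h ↦ Ne.symm h)
  convert hmoving.sub hfixed using 2
  · simp only [id]
    module
  · module

end DividedDifference

/-- The secant step from `x` with second node `y`: the zero of the line through `(x, f x)` and
`(y, f y)`. The modified Steffensen map is `x ↦ secantStep f x (x + g (f x))`. If `slope f x y = 0`,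
in particular if `x = y`, the value is `x`. -/
def secantStep {𝕜 : Type*} [Field 𝕜] (f : 𝕜 → 𝕜) (x y : 𝕜) : 𝕜 :=
  x - f x / slope f x y

theorem secantStep_add {𝕜 : Type*} [Field 𝕜] (f : 𝕜 → 𝕜) (x d : 𝕜) :
    secantStep f x (x + d) = x - f x / ((f (x + d) - f x) / d) := by
  rw [secantStep, slope_def_field, add_sub_cancel_left]

theorem secantStep_sub_root {𝕜 : Type*} [Field 𝕜] {f : 𝕜 → 𝕜} {r x y : 𝕜} (hr : f r = 0)
    (hxy : slope f x y ≠ 0) :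
    secantStep f x y - r = (x - r) * (slope f x y - slope f r x) / slope f x y := by
  have hfx : f x = (x - r) * slope f r x := by
    simpa only [smul_eq_mul, vsub_eq_sub, hr, sub_zero] using (sub_smul_slope f r x).symm
  rw [secantStep, hfx]
  field_simp
  ring

section RCLike

variable {𝕜 : Type*} [RCLike 𝕜] {f f' : 𝕜 → 𝕜} {c r : 𝕜}

theorem tendsto_secantStep_sub_root_div_sq {q : 𝕜 → 𝕜} {q' : 𝕜}
    (hf : ∀ᶠ x in 𝓝 r, HasDerivAt f (f' x) x) (hf' : HasDerivAt f' c r)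
    (hr : f r = 0) (hr' : f' r ≠ 0)
    (hq : HasDerivAt q q' r) (hqr : q r = r) (hqne : ∀ᶠ x in 𝓝[≠] r, q x ≠ x) :
    Tendsto (fun x ↦ (secantStep f x (q x) - r) / (x - r) ^ 2) (𝓝[≠] r)
      (𝓝 (c * q' / (2 * f' r))) := by
  have hdiff := tendsto_inv_smul_slope_sub_slope hf hf' hq hqr hqne
  have hslope : Tendsto (fun x ↦ slope f x (q x)) (𝓝[≠] r) (𝓝 (f' r)) := by
    have herr : Tendsto (fun x ↦ x - r) (𝓝[≠] r) (𝓝 0) :=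
      tendsto_sub_nhds_zero_iff.2 (tendsto_id.mono_left nhdsWithin_le_nhds)
    have hsum := hf.self_of_nhds.tendsto_slope.add (herr.smul hdiff)
    rw [zero_smul, add_zero] at hsum
    refine hsum.congr' ?_
    filter_upwards [self_mem_nhdsWithin] with x hx
    rw [smul_inv_smul₀ (sub_ne_zero.2 hx), add_sub_cancel]
  have hlimit : c * q' / (2 * f' r) = (q' / 2) • c / f' r := by
    rw [smul_eq_mul]
    ring
  rw [hlimit]
  refine (hdiff.div hslope hr').congr' ?_
  filter_upwards [self_mem_nhdsWithin, hslope.eventually_ne hr'] with x hx hslope_ne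
  have hx0 : x - r ≠ 0 := sub_ne_zero.2 hx
  rw [secantStep_sub_root hr hslope_ne, Pi.div_apply, smul_eq_mul]
  field_simp

theorem modified_steffensen_second_order_error_coefficient_general {g : 𝕜 → 𝕜} {g' : 𝕜}
    (hf : ∀ᶠ x in 𝓝 r, HasDerivAt f (f' x) x) (hf' : HasDerivAt f' c r)
    (hr : f r = 0) (hr' : f' r ≠ 0)
    (hg : HasDerivAt g g' 0) (hg0 : g 0 = 0) (hgne : ∀ᶠ y in 𝓝[≠] 0, g y ≠ 0) :
    Tendsto (fun x ↦ (x - f x / ((f (x + g (f x)) - f x) / g (f x)) - r) / (x - r) ^ 2)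
      (𝓝[≠] r) (𝓝 (c * (1 + g' * f' r) / (2 * f' r))) := by
  have hfr : HasDerivAt f (f' r) r := hf.self_of_nhds
  have hnode : HasDerivAt (fun x ↦ x + g (f x)) (1 + g' * f' r) r :=
    (hasDerivAt_id r).add (HasDerivAt.comp r (hr ▸ hg) hfr)
  have hnode_ne : ∀ᶠ x in 𝓝[≠] r, x + g (f x) ≠ x := by
    have hf_tendsto : Tendsto f (𝓝[≠] r) (𝓝[≠] 0) := hr ▸ hfr.tendsto_nhdsNE hr'
    filter_upwards [hf_tendsto.eventually hgne] with x hx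
    simpa only [ne_eq, add_eq_left] using hx
  simpa only [secantStep_add] using tendsto_secantStep_sub_root_div_sq hf hf' hr hr' hnode
    (by rw [hr, hg0, add_zero]) hnode_ne

end RCLike

/-- The second-order error coefficient of the modified Steffensen iteration
map `v(x) = x - f x / h x`, `h(x) = (f (x + g (f x)) - f x) / g (f x)`:
`(v x - x*) / (x - x*)² → f''(x*) (1 + g'(0) f'(x*)) / (2 f'(x*))`
as `x → x*` through points `x ≠ x*`.  This is the coefficient `v''(x*)/2` in the
error recurrence `e_{k+1} = (1/2) v''(x*) e_k² + O(e_k³)`. -/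
theorem modified_steffensen_second_order_error_coefficient
    (f : ℝ → ℝ) (hf : ContDiff ℝ 2 f) (xs : ℝ)
    (hroot : f xs = 0) (hf' : deriv f xs ≠ 0)
    (g : ℝ → ℝ) (hg : ContDiff ℝ 1 g) (hg0 : g 0 = 0) (hg' : deriv g 0 ≠ 0) :
    Tendsto (fun x : ℝ =>
        ((x - f x / ((f (x + g (f x)) - f x) / g (f x))) - xs) / (x - xs) ^ 2)
      (𝓝[≠] xs)
      (𝓝 (deriv (deriv f) xs * (1 + deriv g 0 * deriv f xs) /
        (2 * deriv f xs))) := by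
  have hderiv_g : HasDerivAt g (deriv g 0) 0 := (hg.differentiable_one 0).hasDerivAt
  exact modified_steffensen_second_order_error_coefficient_general
    (.of_forall fun x ↦ (hf.differentiable two_ne_zero x).hasDerivAt)
    (hf.differentiable_deriv_two xs).hasDerivAt hroot hf' hderiv_g hg0
    (hderiv_g.eventually_ne hg')
end

section
/- Let k ≥ 1, let F : ℝᵏ → ℝ be continuously differentiable, let x̄* ∈ ℝᵏ satisfy F(x̄*) = 0, and let g : ℝ → ℝ be continuously differentiable with g(0) = 0 and g'(0) ≠ 0. For each index j define T_j(x̄) = (F(x̄ + g(F(x̄))·e_j) − F(x̄)) / g(F(x̄)), where e_j is the j-th standard basis vector. Then the vector (T_1(x̄), …, T_k(x̄)) converges to the gradient ∇F(x̄*) as x̄ → x̄* through points where F(x̄) ≠ 0 and g(F(x̄)) ≠ 0. -/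
open Filter Topology

/-!
A continuously differentiable function is strictly differentiable at every point, so its difference
quotients converge to the derivative even when the base point moves together with the increment.
Here the base point `x` tends to the root `x̄*`, and the increment `g (F x) • e_j` tends to `0`
because `g (F x̄*) = g 0 = 0`; hence `T_j` tends to the `j`-th partial derivative of `F` at `x̄*`.
-/

section StrictDerivative

open Asymptotics

variable {α 𝕜 E F : Type*} [NontriviallyNormedField 𝕜]
  [AddCommGroup E] [Module 𝕜 E] [TopologicalSpace E] [ContinuousAdd E] [ContinuousSMul 𝕜 E]
  [AddCommGroup F] [Module 𝕜 F] [TopologicalSpace F] [ContinuousAdd F] [ContinuousSMul 𝕜 F]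
  {f : E → F} {f' : E →L[𝕜] F} {a : E} {l : Filter α} {x : α → E}

theorem tendsto_smul_sub_of_hasStrictFDerivAt (hf : HasStrictFDerivAt f f' a)
    (hx : Tendsto x l (𝓝 a)) {c : α → 𝕜} {d : α → E} {v : E} (hd : Tendsto d l (𝓝 0))
    (hcd : Tendsto (fun i ↦ c i • d i) l (𝓝 v)) :
    Tendsto (fun i ↦ c i • (f (x i + d i) - f (x i))) l (𝓝 (f' v)) := by
  have hpair : Tendsto (fun i ↦ (x i + d i, x i)) l (𝓝 (a, a)) := by
    simpa using (hx.add hd).prodMk_nhds hx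
  have hremainder := calc
    (fun i ↦ c i • (f (x i + d i) - f (x i)) - f' (c i • d i)) =o[𝕜; l] fun i ↦ c i • d i := by
      simpa [smul_sub] using hf.isLittleOTVS.comp_tendsto hpair |>.smul_left c
    _ =O[𝕜; l] (1 : α → 𝕜) := hcd.isBigOTVS_one _
  rw [isLittleOTVS_one] at hremainder
  simpa using hremainder.add ((f'.continuous.tendsto v).comp hcd)

theorem tendsto_inv_smul_sub_of_hasStrictFDerivAt (hf : HasStrictFDerivAt f f' a)
    (hx : Tendsto x l (𝓝 a)) {t : α → 𝕜} (ht : Tendsto t l (𝓝[≠] 0)) (v : E) :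
    Tendsto (fun i ↦ (t i)⁻¹ • (f (x i + t i • v) - f (x i))) l (𝓝 (f' v)) := by
  obtain ⟨ht_zero, ht_ne⟩ := tendsto_nhdsWithin_iff.1 ht
  refine tendsto_smul_sub_of_hasStrictFDerivAt hf hx ?_ ?_
  · simpa using ht_zero.smul_const v
  · exact tendsto_nhds_of_eventually_eq (ht_ne.mono fun i hi ↦ inv_smul_smul₀ hi v)

end StrictDerivative

section Gradient

open scoped ComplexConjugate

variable {α 𝕜 ι : Type*} [RCLike 𝕜] [Fintype ι] [DecidableEq ι]

theorem gradient_euclideanSpace_apply (F : EuclideanSpace 𝕜 ι → 𝕜) (x : EuclideanSpace 𝕜 ι)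
    (j : ι) : gradient F x j = conj (fderiv 𝕜 F x (EuclideanSpace.single j 1)) := by
  rw [← inner_gradient_right, EuclideanSpace.inner_single_left, map_one, one_mul]

theorem tendsto_toLp_divided_difference_gradient {F : EuclideanSpace ℝ ι → ℝ}
    {F' : EuclideanSpace ℝ ι →L[ℝ] ℝ} {a : EuclideanSpace ℝ ι} (hF : HasStrictFDerivAt F F' a)
    {l : Filter α} {x : α → EuclideanSpace ℝ ι} (hx : Tendsto x l (𝓝 a))
    {t : α → ℝ} (ht : Tendsto t l (𝓝[≠] 0)) :
    Tendsto (fun i ↦ WithLp.toLp 2 fun j ↦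
        (F (x i + t i • EuclideanSpace.single j 1) - F (x i)) / t i)
      l (𝓝 (gradient F a)) := by
  have hcoord (j : ι) : Tendsto (fun i ↦
      (F (x i + t i • EuclideanSpace.single j 1) - F (x i)) / t i) l (𝓝 (gradient F a j)) := by
    rw [gradient_euclideanSpace_apply, hF.hasFDerivAt.fderiv, conj_trivial]
    simpa only [div_eq_inv_mul, smul_eq_mul] using
      tendsto_inv_smul_sub_of_hasStrictFDerivAt hF hx ht (EuclideanSpace.single j 1)
  exact ((PiLp.continuous_toLp 2 fun _ : ι ↦ ℝ).tendsto _).comp (tendsto_pi_nhds.2 hcoord)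

theorem modified_steffensen_gradient_estimate_tendsto_general {F : EuclideanSpace ℝ ι → ℝ}
    {F' : EuclideanSpace ℝ ι →L[ℝ] ℝ} {xs : EuclideanSpace ℝ ι} (hF : HasStrictFDerivAt F F' xs)
    {g : ℝ → ℝ} (hg : ContinuousAt g (F xs)) (hg0 : g (F xs) = 0) :
    Tendsto (fun x ↦ WithLp.toLp 2 fun j ↦
        (F (x + g (F x) • EuclideanSpace.single j 1) - F x) / g (F x))
      (𝓝[{x | g (F x) ≠ 0}] xs) (𝓝 (gradient F xs)) := by
  have hstep : Tendsto (fun x ↦ g (F x)) (𝓝 xs) (𝓝 0) :=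
    hg0 ▸ (hg.comp hF.continuousAt).tendsto
  exact tendsto_toLp_divided_difference_gradient hF (tendsto_id.mono_left nhdsWithin_le_nhds)
    (tendsto_nhdsWithin_iff.2 ⟨hstep.mono_left nhdsWithin_le_nhds, self_mem_nhdsWithin⟩)

end Gradient

/-- For a continuously differentiable scalar field `F : ℝᵏ → ℝ` with a root
`x̄*`, the vector of divided differences
`T_j(x̄) = (F (x̄ + g (F x̄) • e_j) - F x̄) / g (F x̄)` converges to the
gradient `∇F(x̄*)` as `x̄ → x̄*` through points where `F x̄ ≠ 0` and
`g (F x̄) ≠ 0`. -/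
theorem modified_steffensen_gradient_estimate_tendsto
    (k : ℕ) (hk : 1 ≤ k)
    (F : EuclideanSpace ℝ (Fin k) → ℝ) (hF : ContDiff ℝ 1 F)
    (xs : EuclideanSpace ℝ (Fin k)) (hroot : F xs = 0)
    (g : ℝ → ℝ) (hg : ContDiff ℝ 1 g) (hg0 : g 0 = 0) (hg' : deriv g 0 ≠ 0) :
    Tendsto (fun x : EuclideanSpace ℝ (Fin k) =>
        (WithLp.equiv 2 (Fin k → ℝ)).symm (fun j : Fin k =>
          (F (x + g (F x) • EuclideanSpace.single j 1) - F x) / g (F x)))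
      (𝓝[{x : EuclideanSpace ℝ (Fin k) | F x ≠ 0 ∧ g (F x) ≠ 0}] xs)
      (𝓝 (gradient F xs)) :=
  (modified_steffensen_gradient_estimate_tendsto_general (hF.hasStrictFDerivAt one_ne_zero)
    hg.continuous.continuousAt (hroot ▸ hg0)).mono_left (nhdsWithin_mono xs fun _ hx ↦ hx.2)
end
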